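/- A complete first-order theory T in a countable language is ℵ₀-categorical if and only if for every n, every complete n-type of T is a principal (isolated) type. -/

import Mathlib

open FirstOrder FirstOrder.Language Cardinal

/-- A complete type `p` over `T` in `n` variables is principal (isolated) if some formula `φ`
consistent with `T` implies (modulo `T`) every formula in `p`. -/
def FirstOrder.Language.Theory.CompleteType.IsPrincipal {L : Language} {T : L.Theory} {n : ℕ}
    (p : T.CompleteType (Fin n)) : Prop :=
  ∃ φ : L.Formula (Fin n),
    (∃ (M : Theory.ModelType.{0, 0, 0} T) (v : Fin n → M), φ.Realize v) ∧
    ∀ ψ : L.Formula (Fin n), Formula.equivSentence ψ ∈ p →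
      ∀ (M : Theory.ModelType.{0, 0, 0} T) (v : Fin n → M), φ.Realize v → ψ.Realize v

/-!
A countable model whose elements are enumerated by `v : ℕ → M` is recorded by the type of `v`, a
point of the Stone space of types in variables `ℕ`. That space is compact Hausdorff, hence Baire,
and by the Tarski–Vaught test a generic point of it enumerates an elementary substructure of its
realization. If `p` is not principal, that is, not an isolated point, then no tuple of a generic
enumeration realizes `p`. A countable model omitting `p` and one realizing `p` then refute
`ℵ₀`-categoricity. If `T` has a finite model, its types are the finitely many realized there, since
the types realized in a model are dense; so each of them is isolated.

Conversely, if all types are principal, the formula isolating the type of a finite tuple `(a, m)`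
transports an existential statement about `a` to any tuple `b` with the type of `a`, so that
back-and-forth makes any two countable models isomorphic.
-/

namespace RyllNardzewski

universe u v w w'

section Formulas

variable {L : FirstOrder.Language.{u, v}} {α : Type*}

theorem realize_update_iff [DecidableEq α] {ψ : L.Formula α} {j : α} (hj : j ∉ ψ.freeVarFinset)
    {M : Type*} [L.Structure M] (v : α → M) (a : M) :
    ψ.Realize (Function.update v j a) ↔ ψ.Realize v := by
  have h_agree (i : ψ.freeVarFinset) : v i = Function.update v j a i :=
    (Function.update_of_ne (ne_of_mem_of_not_mem i.2 hj) a v).symm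
  exact (BoundedFormula.realize_restrictFreeVar (f := id) _ h_agree).symm.trans
    (BoundedFormula.realize_restrictFreeVar (f := id) (v := fun i => v i) v fun _ => rfl)

theorem exists_formula_realize_iff_exists_comp {β : Type*} [Finite β] (ψ : L.Formula α)
    (i : β → α) :
    ∃ φ : L.Formula β, ∀ (M : Type w) [L.Structure M] [Nonempty M] (a : β → M),
      φ.Realize a ↔ ∃ v : α → M, ψ.Realize v ∧ v ∘ i = a := by
  classical
  let s : Set α := ψ.freeVarFinset ∪ Set.range i
  have hs : (ψ.freeVarFinset : Set α) ⊆ s := Set.subset_union_left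
  have hi (b : β) : i b ∈ s := Or.inr ⟨b, rfl⟩
  have : Finite s := (ψ.freeVarFinset.finite_toSet.union (Set.finite_range i)).to_subtype
  let equations : L.Formula (β ⊕ s) := Formula.iInf fun b : β =>
    (Term.var (Sum.inr ⟨i b, hi b⟩)).equal (Term.var (Sum.inl b))
  refine ⟨Formula.iExs s (Formula.relabel Sum.inr (ψ.restrictFreeVar (Set.inclusion hs)) ⊓
    equations), fun M _ _ a => ?_⟩
  have hrestrict (v : α → M) :
      Formula.Realize (ψ.restrictFreeVar (Set.inclusion hs)) (v ∘ ((↑) : s → α)) ↔ ψ.Realize v :=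
    BoundedFormula.realize_restrictFreeVar' hs
  simp only [Formula.realize_iExs, Formula.realize_inf, Formula.realize_relabel,
    Sum.elim_comp_inr, equations, Formula.realize_iInf, Formula.realize_equal, Term.realize_var,
    Sum.elim_inl, Sum.elim_inr, Subtype.val_injective.surjective_comp_right.exists, hrestrict,
    Function.comp_apply, funext_iff]

end Formulas

section BackAndForth

variable {L : FirstOrder.Language.{u, v}} {M : Type w} {N : Type w'} [L.Structure M] [L.Structure N]

variable (L) in
/-- A relation between two structures is elementary if tuples that are related componentwise
satisfy the same formulas. Since equality is a formula, these relations are exactly the graphs of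
partial elementary maps. -/
def IsElementaryRel (R : Set (M × N)) : Prop :=
  ∀ ⦃n : ℕ⦄ (a : Fin n → M) (b : Fin n → N), (∀ i, (a i, b i) ∈ R) →
    ∀ ψ : L.Formula (Fin n), ψ.Realize a ↔ ψ.Realize b

variable (L M N) in
/-- The "forth" half of the back-and-forth condition for finite partial elementary maps from `M`
to `N`; its "back" half is the same condition with `M` and `N` exchanged. -/
def IsElementaryExtensionPair : Prop :=
  ∀ F : Set (M × N), F.Finite → IsElementaryRel L F →
    ∀ m, ∃ n, IsElementaryRel L (insert (m, n) F)

theorem isElementaryRel_range {ι : Type*} {a : ι → M} {b : ι → N}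
    (h : ∀ ψ : L.Formula ι, ψ.Realize a ↔ ψ.Realize b) :
    IsElementaryRel L (Set.range fun i => (a i, b i)) := by
  intro n a' b' hmem ψ
  choose σ hσ using hmem
  obtain rfl : a ∘ σ = a' := funext fun i => congrArg Prod.fst (hσ i)
  obtain rfl : b ∘ σ = b' := funext fun i => congrArg Prod.snd (hσ i)
  simpa only [Formula.realize_relabel] using h (ψ.relabel σ)

theorem isElementaryRel_empty (h : M ≅[L] N) : IsElementaryRel L (∅ : Set (M × N)) := by
  simpa only [Set.range_eq_empty] using isElementaryRel_range
    (a := (default : Empty → M)) (b := (default : Empty → N)) h.realize_sentence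

namespace IsElementaryRel

variable {R : Set (M × N)}

theorem preimage_swap (h : IsElementaryRel L R) :
    IsElementaryRel L (Prod.swap ⁻¹' R : Set (N × M)) :=
  fun _ a b hmem ψ => (h b a hmem ψ).symm

theorem iUnion {S : ℕ → Set (M × N)} (hS : Monotone S) (h : ∀ k, IsElementaryRel L (S k)) :
    IsElementaryRel L (⋃ k, S k) := by
  intro n a b hmem
  simp only [Set.mem_iUnion] at hmem
  choose k hk using hmem
  obtain ⟨K, hK⟩ := Finite.exists_le k
  exact h K a b fun i => hS (hK i) (hk i)

theorem fst_eq_iff_snd_eq (h : IsElementaryRel L R) {m m' : M} {n n' : N}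
    (hmn : (m, n) ∈ R) (hmn' : (m', n') ∈ R) : m = m' ↔ n = n' := by
  simpa using h ![m, m'] ![n, n'] (by simp [Fin.forall_fin_two, hmn, hmn'])
    ((Term.var 0 : L.Term (Fin 2)).equal (Term.var 1))

theorem nonempty_equiv (h : IsElementaryRel L R) (htotal : ∀ m, ∃ n, (m, n) ∈ R)
    (hsurj : ∀ n, ∃ m, (m, n) ∈ R) : Nonempty (M ≃[L] N) := by
  choose f hf using htotal
  choose g hg using hsurj
  refine ⟨{
    toFun := f
    invFun := g
    left_inv := fun m => (h.fst_eq_iff_snd_eq (hg (f m)) (hf m)).2 rfl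
    right_inv := fun n => (h.fst_eq_iff_snd_eq (hf (g n)) (hg n)).1 rfl
    map_fun' := fun {n} F x => ?_
    map_rel' := fun {n} r x => ?_ }⟩
  · have hgraph := h (Fin.cons (Structure.funMap F x) x)
      (Fin.cons (f (Structure.funMap F x)) (f ∘ x)) (Fin.cases (hf _) fun i => hf (x i))
      (Formula.graph F)
    rw [Formula.realize_graph, Formula.realize_graph] at hgraph
    exact (hgraph.1 rfl).symm
  · have hrel := h x (f ∘ x) (fun i => hf (x i)) (r.formula Term.var)
    simp only [Formula.realize_rel, Term.realize_var] at hrel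
    exact hrel.symm

end IsElementaryRel

theorem IsElementaryExtensionPair.exists_insert_right (hNM : IsElementaryExtensionPair L N M)
    {F : Set (M × N)} (hF : F.Finite) (h : IsElementaryRel L F) (n : N) :
    ∃ m, IsElementaryRel L (insert (m, n) F) := by
  obtain ⟨m, hm⟩ := hNM _ (hF.preimage Prod.swap_injective.injOn) h.preimage_swap n
  refine ⟨m, ?_⟩
  convert hm.preimage_swap using 1
  ext ⟨x, y⟩
  simp [and_comm]

theorem nonempty_equiv_of_isElementaryExtensionPair [Countable M] [Countable N] (h : M ≅[L] N)
    (hMN : IsElementaryExtensionPair L M N) (hNM : IsElementaryExtensionPair L N M) :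
    Nonempty (M ≃[L] N) := by
  let P := {F : Set (M × N) // F.Finite ∧ IsElementaryRel L F}
  let start : P := ⟨∅, Set.finite_empty, isElementaryRel_empty h⟩
  have hforth (m : M) : IsCofinal {F : P | ∃ n, (m, n) ∈ F.1} := fun ⟨F, hfin, hF⟩ =>
    let ⟨n, hn⟩ := hMN F hfin hF m
    ⟨⟨_, hfin.insert _, hn⟩, ⟨n, Set.mem_insert _ _⟩, Set.subset_insert _ _⟩
  have hback (n : N) : IsCofinal {F : P | ∃ m, (m, n) ∈ F.1} := fun ⟨F, hfin, hF⟩ =>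
    let ⟨m, hm⟩ := hNM.exists_insert_right hfin hF n
    ⟨⟨_, hfin.insert _, hm⟩, ⟨m, Set.mem_insert _ _⟩, Set.subset_insert _ _⟩
  let D : M ⊕ N → Order.Cofinal P := Sum.elim (fun m => ⟨_, hforth m⟩) fun n => ⟨_, hback n⟩
  let _ := Encodable.ofCountable (M ⊕ N)
  let S : ℕ → P := Order.sequenceOfCofinals start D
  have hmono : Monotone fun k => (S k).1 := Order.sequenceOfCofinals.monotone start D
  refine (IsElementaryRel.iUnion hmono fun k => (S k).2.2).nonempty_equiv (fun m => ?_) fun n => ?_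
  · obtain ⟨n, hn⟩ := Order.sequenceOfCofinals.encode_mem start D (Sum.inl m)
    exact ⟨n, Set.mem_iUnion.2 ⟨_, hn⟩⟩
  · obtain ⟨m, hm⟩ := Order.sequenceOfCofinals.encode_mem start D (Sum.inr n)
    exact ⟨m, Set.mem_iUnion.2 ⟨_, hm⟩⟩

end BackAndForth

section Types

variable {L : FirstOrder.Language.{u, v}} {T : L.Theory} {α : Type w}

theorem typeOf_eq_typeOf_iff {M N : Type*} [L.Structure M] [L.Structure N] [M ⊨ T] [N ⊨ T]
    [Nonempty M] [Nonempty N] {a : α → M} {b : α → N} :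
    T.typeOf a = T.typeOf b ↔ ∀ ψ : L.Formula α, ψ.Realize a ↔ ψ.Realize b := by
  simp only [SetLike.ext_iff, Formula.equivSentence.surjective.forall,
    Theory.CompleteType.formula_mem_typeOf]

theorem typeOf_comp_elementaryEmbedding {M N : Type*} [L.Structure M] [L.Structure N] [M ⊨ T]
    [N ⊨ T] [Nonempty M] [Nonempty N] (f : M ↪ₑ[L] N) (a : α → M) :
    T.typeOf (f ∘ a) = T.typeOf a :=
  typeOf_eq_typeOf_iff.2 fun ψ => f.map_formula ψ a

theorem dense_of_forall_realize {U : Set (T.CompleteType α)}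
    (hU : ∀ (ψ : L.Formula α) (M : Theory.ModelType.{u, v, max u v w} T) (a : α → M),
      ψ.Realize a → ∃ q ∈ U, Formula.equivSentence ψ ∈ q) : Dense U := by
  refine CompleteType.isTopologicalBasis_range_typesWith.dense_iff.2 ?_
  rintro _ ⟨σ, rfl⟩ ⟨p, hp⟩
  obtain ⟨M, a, rfl⟩ := Theory.exists_modelType_is_realized_in T p
  obtain ⟨q, hqU, hq⟩ := hU _ M a (Theory.CompleteType.mem_typeOf.1 hp)
  rw [Equiv.apply_symm_apply] at hq
  exact ⟨q, hq, hqU⟩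

theorem dense_realizedTypes (hT : T.IsComplete) (M : Type*) [L.Structure M] [M ⊨ T]
    [Nonempty M] : Dense (T.realizedTypes M α) := by
  refine dense_of_forall_realize fun ψ N a ha => ?_
  classical
  have hN : N ⊨ ψ.exClosure := Formula.exists_realize_equivSentence_iff_realize_exClosure.1
    ⟨a, (Theory.CompleteType.formula_mem_typeOf (T := T)).2 ha⟩
  have hM : M ⊨ ψ.exClosure :=
    ((hT.models_elementarily_equivalent N M).realize_sentence _).1 hN
  obtain ⟨b, hb⟩ := Formula.exists_realize_equivSentence_iff_realize_exClosure.2 hM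
  exact ⟨T.typeOf b, ⟨b, rfl⟩, hb⟩

end Types

section Henkin

variable {L : FirstOrder.Language.{u, v}} {ι : Type w}

/-- The Henkin axiom stating that if `χ(x, y)` holds for some `y`, then it holds for `y = xⱼ`. The
existentially quantified variable is the one indexed by `Fin 1`. -/
noncomputable def henkinAxiom (χ : L.Formula (ι ⊕ Fin 1)) (j : ι) : L.Formula ι :=
  (χ.iExs (Fin 1)).imp (χ.relabel (Sum.elim id fun _ => j))

theorem realize_henkinAxiom {χ : L.Formula (ι ⊕ Fin 1)} {j : ι} {M : Type*} [L.Structure M]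
    {v : ι → M} : (henkinAxiom χ j).Realize v ↔
      ((∃ y, χ.Realize (Sum.elim v y)) → χ.Realize (Sum.elim v fun _ => v j)) := by
  rw [henkinAxiom, Formula.realize_imp, Formula.realize_iExs, Formula.realize_relabel,
    Sum.comp_elim, Function.comp_id, Function.comp_def]

theorem exists_realize_henkinAxiom [Infinite ι] {M : Type*} [L.Structure M] {v : ι → M}
    {ψ : L.Formula ι} (hψ : ψ.Realize v) (χ : L.Formula (ι ⊕ Fin 1)) :
    ∃ (v' : ι → M) (j : ι), ψ.Realize v' ∧ (henkinAxiom χ j).Realize v' := by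
  classical
  by_cases hχ : ∃ y, χ.Realize (Sum.elim v y)
  · obtain ⟨y, hy⟩ := hχ
    obtain ⟨j, hj⟩ := Infinite.exists_notMem_finset (ψ.freeVarFinset ∪ χ.freeVarFinset.toLeft)
    simp only [Finset.mem_union, not_or, Finset.mem_toLeft] at hj
    refine ⟨Function.update v j (y 0), j, (realize_update_iff hj.1 v _).2 hψ,
      realize_henkinAxiom.2 fun _ => ?_⟩
    have hy0 : (fun _ => y 0) = y := funext fun k => congrArg y (Subsingleton.elim 0 k)
    rwa [Function.update_self, hy0, ← Sum.update_elim_inl, realize_update_iff hj.2]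
  · exact ⟨v, Classical.arbitrary ι, hψ, realize_henkinAxiom.2 fun h => (hχ h).elim⟩

theorem meetsDefinable_range {M : Type*} [L.Structure M] {v : ι → M}
    (hv : ∀ χ : L.Formula (ι ⊕ Fin 1), ∃ j, (henkinAxiom χ j).Realize v) :
    L.MeetsDefinable (Set.range v) := by
  rintro D ⟨a, ha⟩ hD
  obtain ⟨φ, hφ⟩ := Set.definable_iff_exists_formula_sum.1 hD
  let χ : L.Formula (ι ⊕ Fin 1) := φ.relabel (Sum.map (Set.rangeSplitting v) id)
  have hχ (y : M) : χ.Realize (Sum.elim v fun _ => y) ↔ y ∈ D := by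
    have hmem : y ∈ D ↔ φ.Realize (Sum.elim Subtype.val fun _ => y) :=
      Set.ext_iff.1 hφ fun _ => y
    rw [hmem, Formula.realize_relabel, Sum.elim_comp_map, Set.comp_rangeSplitting,
      Function.comp_id]
  obtain ⟨j, hj⟩ := hv χ
  exact ⟨v j, (hχ _).1 (realize_henkinAxiom.1 hj ⟨_, (hχ a).2 ha⟩), j, rfl⟩

theorem eventually_residual_henkinAxiom {T : L.Theory} [Infinite ι]
    (χ : L.Formula (ι ⊕ Fin 1)) :
    ∀ᶠ q in residual (T.CompleteType ι), ∃ j, Formula.equivSentence (henkinAxiom χ j) ∈ q := by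
  have hopen : IsOpen (⋃ j, T.typesWith (Formula.equivSentence (henkinAxiom χ j))) :=
    isOpen_iUnion fun j => CompleteType.isOpen_typesWith _
  refine Filter.mem_of_superset (residual_of_dense_open hopen ?_) fun q => Set.mem_iUnion.1
  refine dense_of_forall_realize fun ψ M v hv => ?_
  obtain ⟨v', j, hψ, hj⟩ := exists_realize_henkinAxiom hv χ
  exact ⟨T.typeOf v', Set.mem_iUnion.2 ⟨j, Theory.CompleteType.formula_mem_typeOf.2 hj⟩,
    Theory.CompleteType.formula_mem_typeOf.2 hψ⟩

end Henkin

section Principal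

variable {L : FirstOrder.Language.{0, 0}} {T : L.Theory} {n : ℕ} {p : T.CompleteType (Fin n)}

theorem isPrincipal_iff_exists_realize_iff :
    p.IsPrincipal ↔ ∃ φ : L.Formula (Fin n), ∀ (M : Theory.ModelType.{0, 0, 0} T) (a : Fin n → M),
      φ.Realize a ↔ T.typeOf a = p := by
  constructor
  · rintro ⟨φ, ⟨N, b, hb⟩, hφ⟩
    obtain ⟨M, a, rfl⟩ := Theory.exists_modelType_is_realized_in T p
    have htype (N : Theory.ModelType.{0, 0, 0} T) (b : Fin n → N) (hb : φ.Realize b) :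
        T.typeOf b = T.typeOf a := by
      refine typeOf_eq_typeOf_iff.2 fun ψ => ⟨fun hψ => ?_, fun hψ =>
        hφ ψ (Theory.CompleteType.formula_mem_typeOf.2 hψ) N b hb⟩
      by_contra hψa
      have hnot := Theory.CompleteType.formula_mem_typeOf (T := T).2 (Formula.realize_not.2 hψa)
      exact Formula.realize_not.1 (hφ _ hnot N b hb) hψ
    exact ⟨φ, fun N' b' => ⟨htype N' b', fun h' =>
      (typeOf_eq_typeOf_iff.1 ((htype N b hb).trans h'.symm) φ).1 hb⟩⟩
  · rintro ⟨φ, hφ⟩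
    obtain ⟨M, a, ha⟩ := Theory.exists_modelType_is_realized_in T p
    refine ⟨φ, ⟨M, a, (hφ M a).2 ha⟩, fun ψ hψ N b hb => ?_⟩
    rwa [← (hφ N b).1 hb, Theory.CompleteType.formula_mem_typeOf] at hψ

theorem isPrincipal_of_isOpen_singleton (hp : IsOpen {p}) : p.IsPrincipal := by
  obtain ⟨_, ⟨σ, rfl⟩, hpσ, hσ⟩ :=
    CompleteType.isTopologicalBasis_range_typesWith.exists_subset_of_mem_open
      (Set.mem_singleton p) hp
  refine isPrincipal_iff_exists_realize_iff.2 ⟨Formula.equivSentence.symm σ, fun M a => ?_⟩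
  rw [← Theory.CompleteType.mem_typeOf (T := T)]
  exact ⟨fun h => hσ h, fun h => h ▸ hpσ⟩

theorem isPrincipal_of_finite_model (hT : T.IsComplete) (M : Type*) [L.Structure M] [M ⊨ T]
    [Nonempty M] [Finite M] : p.IsPrincipal := by
  have hfinite : (T.realizedTypes M (Fin n)).Finite := Set.finite_range _
  have huniv : T.realizedTypes M (Fin n) = Set.univ :=
    hfinite.isClosed.closure_eq.symm.trans (dense_realizedTypes hT M).closure_eq
  have : Finite (T.CompleteType (Fin n)) := Set.finite_univ_iff.1 (huniv ▸ hfinite)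
  exact isPrincipal_of_isOpen_singleton (isOpen_discrete _)

theorem eventually_residual_omits (hp : ¬ p.IsPrincipal) {ι : Type} (i : Fin n → ι) :
    ∀ᶠ q in residual (T.CompleteType ι), ∃ χ : L.Formula (Fin n),
      Formula.equivSentence χ ∈ p ∧ Formula.equivSentence (χ.relabel i).not ∈ q := by
  have hopen : IsOpen (⋃ χ ∈ {χ : L.Formula (Fin n) | Formula.equivSentence χ ∈ p},
      T.typesWith (Formula.equivSentence (χ.relabel i).not)) :=
    isOpen_biUnion fun χ _ => CompleteType.isOpen_typesWith _
  refine Filter.mem_of_superset (residual_of_dense_open hopen ?_) fun q hq => by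
    obtain ⟨χ, hχp, hχq⟩ := Set.mem_iUnion₂.1 hq
    exact ⟨χ, hχp, hχq⟩
  refine dense_of_forall_realize fun ψ M v hv => ?_
  obtain ⟨φ, hφ⟩ := exists_formula_realize_iff_exists_comp.{0, 0, 0} ψ i
  obtain ⟨χ, hχ, N, b, hb, hbχ⟩ : ∃ χ : L.Formula (Fin n), Formula.equivSentence χ ∈ p ∧
      ∃ (N : Theory.ModelType.{0, 0, 0} T) (b : Fin n → N), φ.Realize b ∧ ¬ χ.Realize b := by
    by_contra! hall
    exact hp ⟨φ, ⟨M, v ∘ i, (hφ M _).2 ⟨v, hv, rfl⟩⟩, hall⟩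
  obtain ⟨v', hψ, rfl⟩ := (hφ N b).1 hb
  refine ⟨T.typeOf v', Set.mem_iUnion₂.2 ⟨χ, hχ, ?_⟩,
    Theory.CompleteType.formula_mem_typeOf.2 hψ⟩
  exact Theory.CompleteType.formula_mem_typeOf.2
    (Formula.realize_not.2 (mt Formula.realize_relabel.1 hbχ))

theorem isElementaryExtensionPair_of_forall_isPrincipal
    (hp : ∀ (n : ℕ) (p : T.CompleteType (Fin n)), p.IsPrincipal)
    (M N : Theory.ModelType.{0, 0, 0} T) : IsElementaryExtensionPair L M N := by
  intro F hF h m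
  obtain ⟨k, c, -, rfl⟩ := hF.fin_param
  let a : Fin k → M := Prod.fst ∘ c
  let b : Fin k → N := Prod.snd ∘ c
  let am : Fin (k + 1) → M := Fin.snoc a m
  obtain ⟨φ, hφ⟩ := isPrincipal_iff_exists_realize_iff.1 (hp _ (T.typeOf am))
  obtain ⟨θ, hθ⟩ := exists_formula_realize_iff_exists_comp.{0, 0, 0} φ Fin.castSucc
  have hθa : θ.Realize a := (hθ M a).2 ⟨am, (hφ M am).2 rfl, Fin.snoc_comp_castSucc⟩
  have hθb : θ.Realize b := (h a b Set.mem_range_self θ).1 hθa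
  obtain ⟨bn, hbn, hbnb⟩ := (hθ N b).1 hθb
  have hrel := isElementaryRel_range (typeOf_eq_typeOf_iff.1 ((hφ N bn).1 hbn).symm)
  refine ⟨bn (Fin.last k), ?_⟩
  convert hrel
  have hsnoc : (fun j => (am j, bn j)) = Fin.snoc c (m, bn (Fin.last k)) := by
    funext j
    refine Fin.lastCases ?_ (fun j => ?_) j
    · simp [am]
    · simp [am, a, show bn j.castSucc = (c j).2 from congrFun hbnb j]
  rw [hsnoc, Fin.range_snoc]

end Principal

section CountableModels

variable {L : FirstOrder.Language.{0, 0}} {T : L.Theory}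

theorem exists_countable_model_omitting [Countable L.Symbols] (hT : T.IsSatisfiable) {n : ℕ}
    {p : T.CompleteType (Fin n)} (hp : ¬ p.IsPrincipal) :
    ∃ M : Theory.ModelType.{0, 0, 0} T, Countable M ∧ p ∉ T.realizedTypes M (Fin n) := by
  have : Nonempty (T.CompleteType ℕ) := Theory.CompleteType.nonempty_iff.2 hT
  have hgeneric : ∀ᶠ q in residual (T.CompleteType ℕ),
      (∀ χ : L.Formula (ℕ ⊕ Fin 1), ∃ j, Formula.equivSentence (henkinAxiom χ j) ∈ q) ∧
      ∀ i : Fin n → ℕ, ∃ χ : L.Formula (Fin n),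
        Formula.equivSentence χ ∈ p ∧ Formula.equivSentence (χ.relabel i).not ∈ q :=
    (eventually_countable_forall.2 eventually_residual_henkinAxiom).and
      (eventually_countable_forall.2 (eventually_residual_omits hp))
  obtain ⟨q, hhenkin, homit⟩ := (dense_of_mem_residual hgeneric).nonempty
  obtain ⟨M, v, rfl⟩ := Theory.exists_modelType_is_realized_in T q
  simp only [Theory.CompleteType.formula_mem_typeOf] at hhenkin homit
  have hmeets : L.MeetsDefinable (Set.range v) := meetsDefinable_range hhenkin
  let S : L.ElementarySubstructure M := hmeets.toElementarySubstructure
  have hS : (S : Set M) = Set.range v := hmeets.closure_eq_self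
  refine ⟨Theory.ModelType.of T S, (hS ▸ Set.countable_range v : (S : Set M).Countable).to_subtype,
    ?_⟩
  rintro ⟨x : Fin n → S, rfl⟩
  have hx (k : Fin n) : ∃ j, v j = x k := hS.subset (x k).2
  choose i hi using hx
  obtain ⟨χ, hχ, hχi⟩ := homit i
  have hvi : v ∘ i = S.subtype ∘ x := funext hi
  rw [Formula.realize_not, Formula.realize_relabel, hvi, S.subtype.map_formula] at hχi
  exact hχi (Theory.CompleteType.formula_mem_typeOf.1 hχ)

theorem exists_model_mk_eq_aleph0_realizing [Countable L.Symbols]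
    (hInf : ∀ M : Theory.ModelType.{0, 0, 0} T, Infinite M) {α : Type} [Countable α]
    (p : T.CompleteType α) :
    ∃ M : Theory.ModelType.{0, 0, 0} T, #M = ℵ₀ ∧ p ∈ T.realizedTypes M α := by
  obtain ⟨M, v, rfl⟩ := Theory.exists_modelType_is_realized_in T p
  have := hInf M
  obtain ⟨S, hvS, hS⟩ := exists_elementarySubstructure_card_eq L (Set.range v) (ℵ₀ : Cardinal.{0})
    le_rfl (by simpa only [lift_id] using (Set.countable_range v).le_aleph0)
    (by simpa [Language.card] using mk_le_aleph0 (α := L.Symbols)) (by simp)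
  let x : α → S := fun k => ⟨v k, hvS ⟨k, rfl⟩⟩
  exact ⟨Theory.ModelType.of T S, by simpa using hS, x,
    (typeOf_comp_elementaryEmbedding S.subtype x).symm⟩

theorem isPrincipal_of_categorical [Countable L.Symbols]
    (hInf : ∀ M : Theory.ModelType.{0, 0, 0} T, Infinite M)
    (hcat : (ℵ₀ : Cardinal.{0}).Categorical T) {n : ℕ} (p : T.CompleteType (Fin n)) :
    p.IsPrincipal := by
  by_contra hp
  obtain ⟨M, hM, a, rfl⟩ := exists_model_mk_eq_aleph0_realizing hInf p
  obtain ⟨N, hN, homits⟩ := exists_countable_model_omitting (Theory.Model.isSatisfiable M) hp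
  have := hInf N
  obtain ⟨e⟩ := hcat M N hM (mk_eq_aleph0 N)
  exact homits ⟨e ∘ a, typeOf_comp_elementaryEmbedding e.toElementaryEmbedding a⟩

theorem categorical_of_forall_isPrincipal (hT : T.IsComplete)
    (hp : ∀ (n : ℕ) (p : T.CompleteType (Fin n)), p.IsPrincipal) :
    (ℵ₀ : Cardinal.{0}).Categorical T := by
  intro M N hM hN
  have : Countable M := mk_le_aleph0_iff.1 hM.le
  have : Countable N := mk_le_aleph0_iff.1 hN.le
  exact nonempty_equiv_of_isElementaryExtensionPair (hT.models_elementarily_equivalent M N)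
    (isElementaryExtensionPair_of_forall_isPrincipal hp M N)
    (isElementaryExtensionPair_of_forall_isPrincipal hp N M)

end CountableModels

end RyllNardzewski

theorem aleph0_categorical_iff_all_types_principal_general {L : Language} [Countable L.Symbols]
    (T : L.Theory) (hT : T.IsComplete) :
    (Cardinal.aleph0.{0}).Categorical T ↔
      ∀ (n : ℕ) (p : T.CompleteType (Fin n)), p.IsPrincipal := by
  refine ⟨fun hcat n p => ?_, RyllNardzewski.categorical_of_forall_isPrincipal hT⟩
  by_cases hInf : ∀ M : Theory.ModelType.{0, 0, 0} T, Infinite M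
  · exact RyllNardzewski.isPrincipal_of_categorical hInf hcat p
  · obtain ⟨M, hM⟩ := not_forall.1 hInf
    have : Finite M := not_infinite_iff_finite.1 hM
    exact RyllNardzewski.isPrincipal_of_finite_model hT M

/-- A complete theory `T` in a countable language, all of whose models are infinite, is
`ℵ₀`-categorical iff every complete `n`-type of `T` is principal. -/
theorem aleph0_categorical_iff_all_types_principal {L : Language} [Countable L.Symbols]
    (T : L.Theory) (hT : T.IsMaximal)
    (hInf : ∀ M : Theory.ModelType.{0, 0, 0} T, Infinite M) :
    (Cardinal.aleph0.{0}).Categorical T ↔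
      ∀ (n : ℕ) (p : T.CompleteType (Fin n)), p.IsPrincipal :=
  aleph0_categorical_iff_all_types_principal_general T hT.isComplete
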